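/- Let r ∈ ℕ and let 𝒞 be a hereditary class of finite simple graphs such that every graph in 𝒞 is an r-bounded perturbation of some circle graph. Then 𝒞 has bounded twin-width if and only if 𝒞 does not contain all permutation graphs, i.e., if and only if there exists a permutation graph H such that no graph in 𝒞 is isomorphic to H. -/

import Mathlib

open Finset

def IsHomog {V : Type} (G : SimpleGraph V) (A B : Finset V) : Prop :=
  (∀ a ∈ A, ∀ b ∈ B, G.Adj a b) ∨ (∀ a ∈ A, ∀ b ∈ B, ¬ G.Adj a b)

noncomputable def redDegree {V : Type} [Fintype V] [DecidableEq V] (G : SimpleGraph V)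
    (P : Finpartition (univ : Finset V)) (A : Finset V) : ℕ :=
  letI := Classical.decPred fun B : Finset V => ¬ IsHomog G A B
  ((P.parts.erase A).filter fun B => ¬ IsHomog G A B).card

def IsMerge {V : Type} [Fintype V] [DecidableEq V]
    (P Q : Finpartition (univ : Finset V)) : Prop :=
  ∃ A ∈ P.parts, ∃ B ∈ P.parts, A ≠ B ∧
    Q.parts = insert (A ∪ B) ((P.parts.erase A).erase B)

def TwinWidthLE {V : Type} [Fintype V] [DecidableEq V] (G : SimpleGraph V) (d : ℕ) : Prop :=
  ∃ L : List (Finpartition (univ : Finset V)),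
    (∃ P₀, L.head? = some P₀ ∧ ∀ A ∈ P₀.parts, A.card = 1) ∧
    (∃ P₁, L.getLast? = some P₁ ∧ P₁.parts.card ≤ 1) ∧
    List.Chain' IsMerge L ∧
    ∀ P ∈ L, ∀ A ∈ P.parts, redDegree G P A ≤ d

def IsCircleGraph {n : ℕ} (G : SimpleGraph (Fin n)) : Prop :=
  ∃ l r : Fin n → ℚ,
    (∀ v, l v < r v) ∧
    Function.Injective (fun p : Fin n × Bool => if p.2 then r p.1 else l p.1) ∧
    ∀ u v : Fin n, u ≠ v →
      (G.Adj u v ↔ (l u < l v ∧ l v < r u ∧ r u < r v) ∨ (l v < l u ∧ l u < r v ∧ r v < r u))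

def IsPermutationGraph {n : ℕ} (G : SimpleGraph (Fin n)) : Prop :=
  ∃ L1 L2 : LinearOrder (Fin n), ∀ u v : Fin n, u ≠ v →
    (G.Adj u v ↔ (L1.lt u v ∧ L2.lt v u) ∨ (L1.lt v u ∧ L2.lt u v))

def IsInducedSubgraphOf {m n : ℕ} (H : SimpleGraph (Fin m)) (G : SimpleGraph (Fin n)) : Prop :=
  ∃ f : Fin m ↪ Fin n, ∀ u v, H.Adj u v ↔ G.Adj (f u) (f v)

def Hereditary (C : ∀ n : ℕ, Set (SimpleGraph (Fin n))) : Prop :=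
  ∀ (m n : ℕ) (H : SimpleGraph (Fin m)) (G : SimpleGraph (Fin n)),
    G ∈ C n → IsInducedSubgraphOf H G → H ∈ C m

/-- The elementary perturbation of `G` on the vertex subset `X`: the adjacency
relation is complemented on all pairs of distinct vertices of `X`. -/
def ElemPerturb {V : Type} (G : SimpleGraph V) (X : Set V) : SimpleGraph V where
  Adj u v := u ≠ v ∧ Xor' (G.Adj u v) (u ∈ X ∧ v ∈ X)
  symm := by
    constructor
    intro u v h
    refine ⟨Ne.symm h.1, ?_⟩
    rcases h.2 with ⟨h1, h2⟩ | ⟨h1, h2⟩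
    · exact Or.inl ⟨h1.symm, fun c => h2 ⟨c.2, c.1⟩⟩
    · exact Or.inr ⟨⟨h1.2, h1.1⟩, fun c => h2 c.symm⟩
  loopless := ⟨fun v h => h.1 rfl⟩

/-- `G` is obtained from `G₀` by a sequence of at most `r` elementary
perturbations. -/
def BoundedPerturbOf {V : Type} (r : ℕ) (G₀ G : SimpleGraph V) : Prop :=
  ∃ L : List (Set V), L.length ≤ r ∧ G = L.foldl ElemPerturb G₀

/-!
Any two vertices of a suitable permutation graph on a grid are distinguished by almost a full row
or column of the grid, so already the first contraction creates a vertex of large red degree. Hence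
a hereditary class of bounded twin-width misses some permutation graph.

Conversely, let `G` be an `r`-bounded perturbation of a circle graph without some permutation graph
`H` as an induced subgraph. Then `G` is a flip of the circle graph between at most `2 ^ r` colour
classes. Record the chords as ones of a symmetric 0/1 matrix indexed by their endpoints. If the
part of this matrix coming from one colour class, with intervals of consecutive rows and columns
identified, contained a suitable permutation matrix, then the corresponding chords would induce
`H` in `G`. By the Marcus–Tardos theorem these matrices therefore have linearly many ones, so some
two consecutive endpoints can always be identified without creating a row with too many ones.
Doing this repeatedly, and always contracting vertices of the same colour whose chords have become
equal, gives a contraction sequence: a part can only be non-homogeneous to the parts whose chords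
share an endpoint with its own.
-/

/-! ### Contracting along a coarsening of partitions -/

section Contraction

variable {V : Type} [Fintype V] [DecidableEq V] {G : SimpleGraph V} {d : ℕ}
  {P Q R : Finpartition (univ : Finset V)} {A B : Finset V}

lemma exists_parts_eq_insert_union (hA : A ∈ P.parts) (hB : B ∈ P.parts) :
    ∃ Q : Finpartition (univ : Finset V), Q.parts = insert (A ∪ B) ((P.parts.erase A).erase B) := by
  set rest := (P.parts.erase A).erase B with hrest
  have hdisj : Disjoint (rest.sup id) (A ∪ B) := by
    have := P.supIndep.disjoint_sup_sup (u := rest) (v := {A, B}) (by grind) (by grind)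
      (by simp [hrest])
    simpa using this
  have hsup : rest.sup id ∪ (A ∪ B) = univ := by
    refine eq_univ_of_forall fun x => ?_
    obtain ⟨D, hD, hx⟩ := P.exists_mem (mem_univ x)
    by_cases hAB : D = A ∨ D = B
    · grind
    · exact mem_union_left _ (mem_sup.2 ⟨D, by grind, hx⟩)
  have hne : A ∪ B ≠ ∅ := ((P.nonempty_of_mem_parts hA).mono subset_union_left).ne_empty
  exact ⟨(P.ofSubset (parts := rest) (by grind) rfl).extend hne hdisj hsup, rfl⟩

lemma exists_ne_subset_of_lt (hPQ : P < Q) :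
    ∃ A ∈ P.parts, ∃ B ∈ P.parts, A ≠ B ∧ ∃ C ∈ Q.parts, A ⊆ C ∧ B ⊆ C := by
  obtain ⟨C, hC, hCP⟩ : ∃ C ∈ Q.parts, ∀ A ∈ P.parts, ¬ C ⊆ A := by
    by_contra! h
    exact hPQ.not_ge h
  have part_subset : ∀ z ∈ C, P.part z ⊆ C := by
    intro z hz
    obtain ⟨D, hD, hzD⟩ := hPQ.le (P.part_mem.2 (mem_univ z))
    rwa [← Q.eq_of_mem_parts hD hC (hzD (P.mem_part_self.2 (mem_univ z))) hz]
  obtain ⟨x, hx⟩ := Q.nonempty_of_mem_parts hC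
  obtain ⟨y, hy, hyx⟩ := not_subset.1 (hCP _ (P.part_mem.2 (mem_univ x)))
  refine ⟨P.part x, P.part_mem.2 (mem_univ x), P.part y, P.part_mem.2 (mem_univ y), ?_, C, hC,
    part_subset x hx, part_subset y hy⟩
  exact fun h => hyx (h ▸ P.mem_part_self.2 (mem_univ y))

lemma IsMerge.lt (h : IsMerge P Q) : P < Q := by
  obtain ⟨A, hA, B, hB, hAB, hQ⟩ := h
  have hle : P ≤ Q := by
    intro D hD
    by_cases hDAB : D = A ∨ D = B
    · exact ⟨A ∪ B, by grind, by grind⟩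
    · exact ⟨D, by grind, le_rfl⟩
  refine hle.lt_of_ne ?_
  rintro rfl
  have h1 : A = A ∪ B := by
    obtain ⟨a, ha⟩ := P.nonempty_of_mem_parts hA
    exact P.eq_of_mem_parts hA (by grind) ha (mem_union_left _ ha)
  have h2 : B = A ∪ B := by
    obtain ⟨b, hb⟩ := P.nonempty_of_mem_parts hB
    exact P.eq_of_mem_parts hB (by grind) hb (mem_union_right _ hb)
  exact hAB (h1.trans h2.symm)

lemma exists_isMerge_le (hPQ : P < Q) : ∃ P', IsMerge P P' ∧ P' ≤ Q := by
  obtain ⟨A, hA, B, hB, hAB, C, hC, hAC, hBC⟩ := exists_ne_subset_of_lt hPQ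
  obtain ⟨P', hP'⟩ := exists_parts_eq_insert_union hA hB
  refine ⟨P', ⟨A, hA, B, hB, hAB, hP'⟩, fun D hD => ?_⟩
  rw [hP', mem_insert] at hD
  obtain rfl | hD := hD
  · exact ⟨C, hC, union_subset hAC hBC⟩
  · exact hPQ.le (mem_of_mem_erase (mem_of_mem_erase hD))

/-- The red degrees of the trigraph obtained from `G` by contracting the parts of `P` are at most
`d`. -/
def RedDegreesLE (G : SimpleGraph V) (d : ℕ) (P : Finpartition (univ : Finset V)) : Prop :=
  ∀ A ∈ P.parts, redDegree G P A ≤ d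

/-- Some sequence of contractions leads from the trigraph of `P` to that of `Q` with all
red degrees after the first trigraph at most `d`. -/
def ContractsTo (G : SimpleGraph V) (d : ℕ) : (P Q : Finpartition (univ : Finset V)) → Prop :=
  Relation.ReflTransGen fun P Q => IsMerge P Q ∧ RedDegreesLE G d Q

lemma contractsTo_of_le (hPQ : P ≤ Q) (h : ∀ R, P ≤ R → R ≤ Q → RedDegreesLE G d R) :
    ContractsTo G d P Q := by
  induction P using WellFoundedGT.induction with
  | ind P ih =>
    obtain rfl | hlt := hPQ.eq_or_lt
    · exact .refl
    · obtain ⟨P', hmerge, hP'Q⟩ := exists_isMerge_le hlt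
      exact .head ⟨hmerge, h P' hmerge.lt.le hP'Q⟩
        (ih P' hmerge.lt hP'Q fun R hR => h R (hmerge.lt.le.trans hR))

lemma redDegree_eq_card_filter [DecidablePred fun B => ¬ IsHomog G A B] :
    redDegree G P A = #{B ∈ P.parts.erase A | ¬ IsHomog G A B} := by
  unfold redDegree
  congr!

lemma redDegree_le_card_parts : redDegree G P A ≤ #P.parts := by
  classical
  rw [redDegree_eq_card_filter]
  exact (card_filter_le _ _).trans card_erase_le

lemma contractsTo_top (h : #P.parts ≤ d) : ContractsTo G d P ⊤ :=
  contractsTo_of_le le_top fun _ hR _ _ _ =>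
    redDegree_le_card_parts.trans ((Finpartition.card_mono hR).trans h)

lemma redDegreesLE_bot : RedDegreesLE G d ⊥ := by
  intro A hA
  obtain ⟨a, -, rfl⟩ := Finpartition.mem_bot_iff.1 hA
  have hhomog : ∀ B ∈ (⊥ : Finpartition (univ : Finset V)).parts, IsHomog G {a} B := by
    intro B hB
    obtain ⟨b, -, rfl⟩ := Finpartition.mem_bot_iff.1 hB
    simpa [IsHomog] using em (G.Adj a b)
  classical
  rw [redDegree_eq_card_filter,
    filter_false_of_mem fun B hB => not_not.2 (hhomog B (mem_of_mem_erase hB))]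
  exact Nat.zero_le d

theorem ContractsTo.twinWidthLE (h : ContractsTo G d ⊥ ⊤) : TwinWidthLE G d := by
  obtain ⟨L, hchain, hlast⟩ := List.exists_isChain_cons_of_relationReflTransGen h
  refine ⟨⊥ :: L, ⟨⊥, rfl, ?_⟩, ⟨⊤, ?_, ?_⟩, hchain.imp fun _ _ h => h.1, ?_⟩
  · intro A hA
    obtain ⟨a, -, rfl⟩ := Finpartition.mem_bot_iff.1 hA
    exact card_singleton a
  · rw [List.getLast?_eq_getLast_of_ne_nil (List.cons_ne_nil _ _), hlast]
  · exact (card_le_card (Finpartition.parts_top_subset _)).trans (card_singleton _).le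
  · exact hchain.induction (RedDegreesLE G d) _ (fun _ _ h _ => h.2) fun _ => redDegreesLE_bot

lemma TwinWidthLE.mono {d' : ℕ} (h : TwinWidthLE G d) (hd : d ≤ d') : TwinWidthLE G d' := by
  obtain ⟨L, hfirst, hlast, hchain, hred⟩ := h
  exact ⟨L, hfirst, hlast, hchain, fun P hP A hA => (hred P hP A hA).trans hd⟩

end Contraction

section FiberPartition

variable {V α : Type} [Fintype V] [DecidableEq V] {G : SimpleGraph V} {κ : V → α}
  {R : Finpartition (univ : Finset V)}

open scoped Classical in
/-- The partition of the vertices into the nonempty fibres of `κ`. -/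
noncomputable def fiberPartition (κ : V → α) : Finpartition (univ : Finset V) :=
  Finpartition.ofSetoid (Setoid.ker κ)

lemma mem_part_fiberPartition {a b : V} : b ∈ (fiberPartition κ).part a ↔ κ a = κ b := by
  classical exact Finpartition.mem_part_ofSetoid_iff_rel

lemma le_fiberPartition_iff :
    R ≤ fiberPartition κ ↔ ∀ A ∈ R.parts, ∀ a ∈ A, ∀ b ∈ A, κ a = κ b := by
  refine ⟨fun h A hA a ha b hb => ?_, fun h A hA => ?_⟩
  · obtain ⟨B, hB, hAB⟩ := h hA
    rw [← mem_part_fiberPartition, (fiberPartition κ).part_eq_of_mem hB (hAB ha)]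
    exact hAB hb
  · obtain ⟨a, ha⟩ := R.nonempty_of_mem_parts hA
    exact ⟨_, (fiberPartition κ).part_mem.2 (mem_univ a),
      fun b hb => mem_part_fiberPartition.2 (h A hA a ha b hb)⟩

lemma fiberPartition_le_iff :
    fiberPartition κ ≤ R ↔ ∀ A ∈ R.parts, ∀ a ∈ A, ∀ b, κ a = κ b → b ∈ A := by
  refine ⟨fun h A hA a ha b hab => ?_, fun h B hB => ?_⟩
  · obtain ⟨C, hC, hBC⟩ := h ((fiberPartition κ).part_mem.2 (mem_univ a))
    rw [← R.eq_of_mem_parts hC hA (hBC (mem_part_fiberPartition.2 rfl)) ha]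
    exact hBC (mem_part_fiberPartition.2 hab)
  · obtain ⟨b, hb⟩ := (fiberPartition κ).nonempty_of_mem_parts hB
    refine ⟨R.part b, R.part_mem.2 (mem_univ b), fun x hx => ?_⟩
    rw [← (fiberPartition κ).part_eq_of_mem hB hb] at hx
    exact h _ (R.part_mem.2 (mem_univ b)) b (R.mem_part_self.2 (mem_univ b)) x
      (mem_part_fiberPartition.1 hx)

lemma fiberPartition_eq_bot (hκ : Function.Injective κ) : fiberPartition κ = ⊥ := by
  refine le_bot_iff.1 (fiberPartition_le_iff.2 fun A _ a ha b hab => ?_)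
  rwa [← hκ hab]

lemma card_parts_fiberPartition_le [Fintype α] (κ : V → α) :
    #(fiberPartition κ).parts ≤ Fintype.card α := by
  refine card_le_card_of_forall_subsingleton (fun A k => ∃ a ∈ A, κ a = k) (fun A hA => ?_)
    fun k _ A hAk B hBk => ?_
  · obtain ⟨a, ha⟩ := (fiberPartition κ).nonempty_of_mem_parts hA
    exact ⟨κ a, mem_univ _, a, ha, rfl⟩
  · obtain ⟨hA, a, ha, rfl⟩ := hAk
    obtain ⟨hB, b, hb, hab⟩ := hBk
    exact (fiberPartition κ).eq_of_mem_parts hA hB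
      (fiberPartition_le_iff.1 le_rfl A hA a ha b hab.symm) hb

lemma redDegree_le_card {A : Finset V} (hκ : fiberPartition κ ≤ R) (K : Finset α)
    (hK : ∀ B ∈ R.parts, ¬ IsHomog G A B → ∃ b ∈ B, κ b ∈ K) : redDegree G R A ≤ #K := by
  classical
  rw [redDegree_eq_card_filter]
  refine card_le_card_of_forall_subsingleton (fun B k => ∃ b ∈ B, κ b = k) (fun B hB => ?_)
    fun k _ B hB C hC => ?_
  · obtain ⟨hBR, hAB⟩ := mem_filter.1 hB
    obtain ⟨b, hb, hbK⟩ := hK B (mem_of_mem_erase hBR) hAB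
    exact ⟨κ b, hbK, b, hb, rfl⟩
  · obtain ⟨hB, b, hb, rfl⟩ := hB
    obtain ⟨hC, c, hc, hbc⟩ := hC
    have hBR := mem_of_mem_erase (mem_filter.1 hB).1
    have hCR := mem_of_mem_erase (mem_filter.1 hC).1
    exact R.eq_of_mem_parts hBR hCR (fiberPartition_le_iff.1 hκ B hBR b hb c hbc.symm) hc

end FiberPartition

/-! ### Grids and the lower bound -/

section LowerBound

lemma exists_ncard_symmDiff_neighborSet_le {V : Type} [Fintype V] [DecidableEq V] [Nontrivial V]
    {G : SimpleGraph V} {t : ℕ} (h : TwinWidthLE G t) :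
    ∃ u v, u ≠ v ∧ (symmDiff (G.neighborSet u) (G.neighborSet v) \ {u, v}).ncard ≤ t := by
  classical
  obtain ⟨L, ⟨P, hfirst, hsingle⟩, ⟨P₁, hlast, hcard⟩, hchain, hred⟩ := h
  have exists_eq_singleton : ∀ A ∈ P.parts, ∃ a, A = {a} := fun A hA => card_eq_one.1 (hsingle A hA)
  have singleton_mem : ∀ a, {a} ∈ P.parts := by
    intro a
    obtain ⟨A, hA, ha⟩ := P.exists_mem (mem_univ a)
    obtain ⟨b, rfl⟩ := exists_eq_singleton A hA
    rwa [mem_singleton.1 ha]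
  obtain ⟨Q, L', rfl⟩ : ∃ Q L', L = P :: Q :: L' := by
    match L, hfirst, hlast with
    | [P], rfl, rfl =>
      obtain ⟨u, v, huv⟩ := exists_pair_ne V
      have := card_le_one.1 hcard _ (singleton_mem u) _ (singleton_mem v)
      exact absurd (singleton_injective this) huv
    | P :: Q :: L', rfl, _ => exact ⟨Q, L', rfl⟩
  obtain ⟨A, hA, B, hB, hAB, hQ⟩ : IsMerge P Q := (List.isChain_cons_cons.1 hchain).1
  obtain ⟨u, rfl⟩ := exists_eq_singleton A hA
  obtain ⟨v, rfl⟩ := exists_eq_singleton B hB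
  refine ⟨u, v, fun huv => hAB (huv ▸ rfl), ?_⟩
  refine le_trans ?_ (hred Q (by simp) ({u} ∪ {v}) (hQ ▸ mem_insert_self _ _))
  rw [redDegree_eq_card_filter, ← Set.ncard_coe_finset]
  refine Set.ncard_le_ncard_of_injOn (fun w => {w}) (fun w hw => ?_) singleton_injective.injOn
    (finite_toSet _)
  simp only [Set.mem_sdiff, Set.mem_symmDiff, SimpleGraph.mem_neighborSet, Set.mem_insert_iff,
    Set.mem_singleton_iff, not_or] at hw
  obtain ⟨hadj, hwu, hwv⟩ := hw
  have hne : ({w} : Finset V) ≠ {u} ∪ {v} := fun h => hwu (by grind)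
  have hmem : ({w} : Finset V) ∈ Q.parts := by
    simpa [hQ, hwu, hwv] using Or.inr (singleton_mem w)
  have hhomog : ¬ IsHomog G ({u} ∪ {v}) {w} := by
    simp only [IsHomog, mem_union, mem_singleton]
    grind
  exact mem_filter.2 ⟨mem_erase.2 ⟨hne, hmem⟩, hhomog⟩

/-- The permutation graph of the grid `α × α` that compares the orders with the first, respectively
the second, coordinate as the leading one, the first coordinate being reversed in the latter.
Any two of its vertices are distinguished by almost a full row or column. -/
def gridGraph (α : Type) [LinearOrder α] : SimpleGraph (α × α) where
  Adj u v := (u.1 < v.1 ∧ v.2 ≤ u.2) ∨ (v.1 < u.1 ∧ u.2 ≤ v.2)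
  symm := ⟨fun _ _ => Or.symm⟩
  loopless := ⟨fun _ h => by simp at h⟩

variable {α : Type} [LinearOrder α]

lemma exists_injective_mem_symmDiff_gridGraph {u v : α × α} (huv : u ≠ v) :
    ∃ (f : α → α × α) (i₀ : α), Function.Injective f ∧ ∀ i ≠ i₀,
      f i ∈ symmDiff ((gridGraph α).neighborSet u) ((gridGraph α).neighborSet v) \ {u, v} := by
  wlog h : toLex u < toLex v generalizing u v
  · rw [symmDiff_comm, Set.pair_comm]
    exact this huv.symm (lt_of_le_of_ne (not_lt.1 h) (toLex.injective.ne huv.symm))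
  obtain ⟨a, b⟩ := u
  obtain ⟨c, d⟩ := v
  have hle : a < c ∨ a = c ∧ b < d := Prod.Lex.toLex_lt_toLex.1 h
  simp only [Set.mem_sdiff, Set.mem_symmDiff, SimpleGraph.mem_neighborSet, gridGraph,
    Set.mem_insert_iff, Set.mem_singleton_iff, not_or]
  obtain hbd | hdb := lt_or_ge b d
  · refine ⟨fun i => if i ≤ c then (i, b) else (i, d), a, fun i j => by grind, fun i hi => ?_⟩
    by_cases hic : i ≤ c <;> simp only [hic, if_true, if_false] <;> grind
  · refine ⟨fun i => if i ≤ b then (c, i) else (a, i), d, fun i j => by grind, fun i hi => ?_⟩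
    by_cases hib : i ≤ b <;> simp only [hib, if_true, if_false] <;> grind

lemma card_le_ncard_symmDiff_gridGraph [Fintype α] {u v : α × α} (huv : u ≠ v) :
    Fintype.card α ≤
      (symmDiff ((gridGraph α).neighborSet u) ((gridGraph α).neighborSet v) \ {u, v}).ncard
        + 1 := by
  obtain ⟨f, i₀, hf, hmem⟩ := exists_injective_mem_symmDiff_gridGraph huv
  have := Set.ncard_le_ncard_of_injOn f (s := {i₀}ᶜ) (fun i hi => hmem i hi) hf.injOn
  rw [Set.ncard_compl, Set.ncard_singleton, Nat.card_eq_fintype_card] at this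
  omega

lemma isPermutationGraph_comap_gridGraph {n : ℕ} (e : Fin n ↪ α × α) :
    IsPermutationGraph ((gridGraph α).comap e) := by
  have hinj : Function.Injective fun x => toLex ((e x).2, OrderDual.toDual (e x).1) :=
    fun x y hxy => by
      obtain ⟨h₂, h₁⟩ := Prod.mk.inj (toLex.injective hxy)
      exact e.injective (Prod.ext (OrderDual.toDual.injective h₁) h₂)
  refine ⟨LinearOrder.lift' (fun x => toLex (e x)) (toLex.injective.comp e.injective),
    LinearOrder.lift' _ hinj, fun u v _ => ?_⟩
  change (gridGraph α).Adj (e u) (e v) ↔ (toLex (e u) < toLex (e v) ∧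
    toLex ((e v).2, OrderDual.toDual (e v).1) < toLex ((e u).2, OrderDual.toDual (e u).1)) ∨
    (toLex (e v) < toLex (e u) ∧
    toLex ((e u).2, OrderDual.toDual (e u).1) < toLex ((e v).2, OrderDual.toDual (e v).1))
  simp only [gridGraph, Prod.Lex.toLex_lt_toLex, OrderDual.toDual_lt_toDual]
  grind

lemma not_twinWidthLE_comap_gridGraph [Fintype α] {V : Type} [Fintype V] [DecidableEq V] {t : ℕ}
    (ht : t + 2 ≤ Fintype.card α) (e : V ≃ α × α) : ¬ TwinWidthLE ((gridGraph α).comap e) t := by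
  intro h
  have : Nontrivial α := Fintype.one_lt_card_iff_nontrivial.1 (by omega)
  have : Nontrivial V := e.nontrivial
  obtain ⟨u, v, huv, hle⟩ := exists_ncard_symmDiff_neighborSet_le h
  have himage : ∀ w, e '' ((gridGraph α).comap e).neighborSet w = (gridGraph α).neighborSet (e w) :=
    fun w => e.image_preimage ((gridGraph α).neighborSet (e w))
  have := card_le_ncard_symmDiff_gridGraph (e.injective.ne huv)
  rw [← himage, ← himage, ← Set.image_pair, ← Set.image_symmDiff e.injective,
    ← Set.image_sdiff e.injective, Set.ncard_image_of_injective _ e.injective] at this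
  omega

theorem exists_isPermutationGraph_not_twinWidthLE (t : ℕ) :
    ∃ (n : ℕ) (H : SimpleGraph (Fin n)), IsPermutationGraph H ∧ ¬ TwinWidthLE H t :=
  ⟨_, (gridGraph (Fin (t + 2))).comap finProdFinEquiv.symm,
    isPermutationGraph_comap_gridGraph finProdFinEquiv.symm.toEmbedding,
    not_twinWidthLE_comap_gridGraph (Fintype.card_fin _).ge _⟩

end LowerBound

/-! ### The Marcus–Tardos theorem -/

section MarcusTardos

lemma strictMono_of_comp {ι α β : Type} [Preorder ι] [LinearOrder α] [Preorder β] {f : α → β}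
    {x : ι → α} (hf : Monotone f) (h : StrictMono (f ∘ x)) : StrictMono x :=
  fun _ _ hij => hf.reflect_lt (h hij)

/-- The 0/1 matrix whose ones are the positions in `A` contains the permutation matrix of `σ`. -/
def ContainsPattern {α β : Type} [Preorder α] [Preorder β] {k : ℕ} (σ : Equiv.Perm (Fin k))
    (A : Finset (α × β)) : Prop :=
  ∃ (a : Fin k → α) (b : Fin k → β), StrictMono a ∧ StrictMono b ∧ ∀ i, (a i, b (σ i)) ∈ A

namespace ContainsPattern

variable {α β γ δ : Type} [LinearOrder α] [LinearOrder β] {k : ℕ} {σ : Equiv.Perm (Fin k)}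
  {A : Finset (α × β)}

lemma of_image_swap (h : ContainsPattern σ⁻¹ (A.image Prod.swap)) : ContainsPattern σ A := by
  obtain ⟨b, a, hb, ha, hA⟩ := h
  exact ⟨a, b, ha, hb, fun i => by simpa using hA (σ i)⟩

lemma of_image_map [LinearOrder γ] [LinearOrder δ] {f : α → γ} {g : β → δ} (hf : Monotone f)
    (hg : Monotone g) (h : ContainsPattern σ (A.image (Prod.map f g))) : ContainsPattern σ A := by
  obtain ⟨a, b, ha, hb, hA⟩ := h
  choose p hp hpab using fun i => mem_image.1 (hA i)
  have hfp : (f ∘ fun i => (p i).1) = a := funext fun i => congrArg Prod.fst (hpab i)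
  have hgp : (g ∘ fun j => (p (σ⁻¹ j)).2) = b :=
    funext fun j => (congrArg Prod.snd (hpab (σ⁻¹ j))).trans (by simp)
  exact ⟨_, _, strictMono_of_comp hf (hfp ▸ ha), strictMono_of_comp hg (hgp ▸ hb),
    fun i => by simpa using hp i⟩

lemma of_forall_exists [LinearOrder γ] {f : α → γ} (hf : Monotone f) {I : Finset γ} {J : Finset β}
    (hI : k ≤ #I) (hJ : k ≤ #J) (h : ∀ i ∈ I, ∀ j ∈ J, ∃ x, f x = i ∧ (x, j) ∈ A) :
    ContainsPattern σ A := by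
  let a := orderEmbOfCardLe I hI
  let b := orderEmbOfCardLe J hJ
  choose x hxa hxA using fun i => h (a i) (orderEmbOfCardLe_mem I hI i) (b (σ i))
    (orderEmbOfCardLe_mem J hJ (σ i))
  have hx : StrictMono (f ∘ x) := (funext hxa : f ∘ x = a) ▸ a.strictMono
  exact ⟨x, b, strictMono_of_comp hf hx, b.strictMono, hxA⟩

end ContainsPattern

variable {k s n : ℕ} {σ : Equiv.Perm (Fin k)} {A : Finset (ℕ × ℕ)} {q : ℕ × ℕ}

/-- The position, in the matrix of all `s × s` blocks, of the block containing a position. -/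
def blockIndex (s : ℕ) : ℕ × ℕ → ℕ × ℕ := Prod.map (· / s) (· / s)

/-- The elements of `A` in the block of size `s` with index `q`. -/
def block (s : ℕ) (A : Finset (ℕ × ℕ)) (q : ℕ × ℕ) : Finset (ℕ × ℕ) :=
  {p ∈ A | blockIndex s p = q}

/-- The indices of the blocks of size `s` in which `A` meets at least `k` columns. -/
def wideBlocks (k s : ℕ) (A : Finset (ℕ × ℕ)) : Finset (ℕ × ℕ) :=
  {q ∈ A.image (blockIndex s) | k ≤ #((block s A q).image Prod.snd)}

/-- The indices of the blocks of size `s` in which `A` meets at least `k` rows. -/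
def tallBlocks (k s : ℕ) (A : Finset (ℕ × ℕ)) : Finset (ℕ × ℕ) :=
  {q ∈ A.image (blockIndex s) | k ≤ #((block s A q).image Prod.fst)}

lemma ContainsPattern.of_image_blockIndex (h : ContainsPattern σ (A.image (blockIndex s))) :
    ContainsPattern σ A :=
  h.of_image_map (fun _ _ => Nat.div_le_div_right) fun _ _ => Nat.div_le_div_right

lemma mem_block {p : ℕ × ℕ} : p ∈ block s A q ↔ p ∈ A ∧ p.1 / s = q.1 ∧ p.2 / s = q.2 := by
  simp [block, blockIndex, Prod.ext_iff]

lemma image_fst_block_subset (hs : 0 < s) :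
    (block s A q).image Prod.fst ⊆ Ico (q.1 * s) (q.1 * s + s) := by
  intro x hx
  obtain ⟨p, hp, rfl⟩ := mem_image.1 hx
  have := (Nat.div_eq_iff hs).1 (mem_block.1 hp).2.1
  exact mem_Ico.2 (by omega)

lemma image_snd_block_subset (hs : 0 < s) :
    (block s A q).image Prod.snd ⊆ Ico (q.2 * s) (q.2 * s + s) := by
  intro x hx
  obtain ⟨p, hp, rfl⟩ := mem_image.1 hx
  have := (Nat.div_eq_iff hs).1 (mem_block.1 hp).2.2
  exact mem_Ico.2 (by omega)

lemma image_swap_block : (block s A q).image Prod.swap = block s (A.image Prod.swap) q.swap := by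
  ext ⟨x, y⟩
  simp only [mem_image, mem_block, Prod.exists, Prod.swap_prod_mk, Prod.mk.injEq, Prod.fst_swap,
    Prod.snd_swap]
  grind

lemma image_swap_tallBlocks :
    (tallBlocks k s A).image Prod.swap = wideBlocks k s (A.image Prod.swap) := by
  have himage : (A.image Prod.swap).image (blockIndex s) =
      (A.image (blockIndex s)).image Prod.swap := by
    rw [image_image, image_image]
    rfl
  ext q
  obtain ⟨q, rfl⟩ := Prod.swap_surjective q
  have hcols :
      (block s (A.image Prod.swap) q.swap).image Prod.snd = (block s A q).image Prod.fst := by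
    rw [← image_swap_block, image_image]
    rfl
  rw [wideBlocks, mem_filter, himage, hcols, Prod.swap_injective.mem_finset_image,
    Prod.swap_injective.mem_finset_image, tallBlocks, mem_filter]

-- Among more than `2 ^ s * k` wide blocks in one block column, `k` meet the same set of columns.
lemma card_wideBlocks_column_le (hs : 0 < s) (hA : ¬ ContainsPattern σ A) (J : ℕ) :
    #{q ∈ wideBlocks k s A | q.2 = J} ≤ 2 ^ s * k := by
  by_contra! hlt
  set W := {q ∈ wideBlocks k s A | q.2 = J}
  have hmaps : ∀ q ∈ W, (block s A q).image Prod.snd ∈ (Ico (J * s) (J * s + s)).powerset := by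
    intro q hq
    rw [mem_powerset, ← (mem_filter.1 hq).2]
    exact image_snd_block_subset hs
  obtain ⟨Y, -, hY⟩ := exists_lt_card_fiber_of_mul_lt_card_of_maps_to hmaps (n := k)
    (by simpa using hlt)
  set F := {q ∈ W | (block s A q).image Prod.snd = Y}
  have hFW : ∀ q ∈ F, q ∈ wideBlocks k s A ∧ q.2 = J ∧ (block s A q).image Prod.snd = Y := by
    simp +contextual [F, W]
  have hrows : #(F.image Prod.fst) = #F :=
    card_image_of_injOn fun x hx y hy hxy =>
      Prod.ext hxy ((hFW x hx).2.1.trans (hFW y hy).2.1.symm)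
  have hkY : k ≤ #Y := by
    obtain ⟨q, hq⟩ := card_pos.1 (by omega : 0 < #F)
    obtain ⟨hwide, -, rfl⟩ := hFW q hq
    exact (mem_filter.1 hwide).2
  refine hA (.of_forall_exists (f := (· / s)) (fun _ _ => Nat.div_le_div_right) (hrows ▸ hY.le)
    hkY (forall_mem_image.2 fun q hq j hj => ?_))
  obtain ⟨p, hp, rfl⟩ := mem_image.1 ((hFW q hq).2.2 ▸ hj)
  obtain ⟨hpA, hpq, -⟩ := mem_block.1 hp
  exact ⟨p.1, hpq, hpA⟩

lemma card_wideBlocks_le (hs : 0 < s) (hA : ¬ ContainsPattern σ A) (hn : ∀ p ∈ A, p.2 / s < n) :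
    #(wideBlocks k s A) ≤ 2 ^ s * k * n := by
  have hmaps : ∀ q ∈ wideBlocks k s A, q.2 ∈ range n := by
    intro q hq
    obtain ⟨p, hp, rfl⟩ := mem_image.1 (mem_filter.1 hq).1
    exact mem_range.2 (hn p hp)
  simpa using card_le_mul_card_image_of_maps_to hmaps (2 ^ s * k)
    fun J _ => card_wideBlocks_column_le hs hA J

lemma card_tallBlocks_le (hs : 0 < s) (hA : ¬ ContainsPattern σ A) (hn : ∀ p ∈ A, p.1 / s < n) :
    #(tallBlocks k s A) ≤ 2 ^ s * k * n := by
  rw [← card_image_of_injective _ Prod.swap_injective, image_swap_tallBlocks]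
  exact card_wideBlocks_le hs (fun h => hA h.of_image_swap) (forall_mem_image.2 hn)

lemma card_block_le (hs : 0 < s) (k : ℕ) :
    #(block s A q) ≤ k ^ 2 + (if k ≤ #((block s A q).image Prod.snd) then s ^ 2 else 0) +
      if k ≤ #((block s A q).image Prod.fst) then s ^ 2 else 0 := by
  have hprod : #(block s A q) ≤ #((block s A q).image Prod.fst) * #((block s A q).image Prod.snd) :=
    (card_le_card subset_product).trans (card_product _ _).le
  have hfst : #((block s A q).image Prod.fst) ≤ s := by
    simpa using card_le_card (image_fst_block_subset (A := A) (q := q) hs)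
  have hsnd : #((block s A q).image Prod.snd) ≤ s := by
    simpa using card_le_card (image_snd_block_subset (A := A) (q := q) hs)
  split_ifs <;> nlinarith

lemma card_le_blocks (hs : 0 < s) (k : ℕ) (A : Finset (ℕ × ℕ)) :
    #A ≤ k ^ 2 * #(A.image (blockIndex s)) + s ^ 2 * #(wideBlocks k s A) +
      s ^ 2 * #(tallBlocks k s A) := by
  calc #A = ∑ q ∈ A.image (blockIndex s), #(block s A q) :=
        card_eq_sum_card_fiberwise fun p hp => mem_image_of_mem _ hp
    _ ≤ ∑ q ∈ A.image (blockIndex s),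
          (k ^ 2 + (if k ≤ #((block s A q).image Prod.snd) then s ^ 2 else 0) +
            if k ≤ #((block s A q).image Prod.fst) then s ^ 2 else 0) :=
        sum_le_sum fun q _ => card_block_le hs k
    _ = _ := by
        simp only [sum_add_distrib, ← sum_filter, sum_const, smul_eq_mul, wideBlocks, tallBlocks,
          mul_comm]

/-- The constant in the Marcus–Tardos theorem for patterns of size `k` that results from blocks of
size `4 * k ^ 2 + 4`. -/
def marcusTardosConst (k : ℕ) : ℕ :=
  4 * ((4 * k ^ 2 + 4) ^ 2 * (2 ^ (4 * k ^ 2 + 4) * k)) + (4 * k ^ 2 + 4)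

lemma card_le_of_lt (hA : ∀ p ∈ A, p.1 < n ∧ p.2 < n) : #A ≤ n * n := by
  have hsub : A ⊆ range n ×ˢ range n := fun p hp => by simpa using hA p hp
  simpa using card_le_card hsub

theorem card_le_of_not_containsPattern (hn : ∀ p ∈ A, p.1 < n ∧ p.2 < n)
    (hA : ¬ ContainsPattern σ A) : #A ≤ marcusTardosConst k * n := by
  obtain ⟨s, hs⟩ : ∃ s, s = 4 * k ^ 2 + 4 := ⟨_, rfl⟩
  have hc : marcusTardosConst k = 4 * (s ^ 2 * (2 ^ s * k)) + s := by rw [hs, marcusTardosConst]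
  generalize marcusTardosConst k = c at hc ⊢
  induction n using Nat.strong_induction_on generalizing A with
  | _ n ih =>
  obtain hns | hsn := lt_or_ge n s
  · exact (card_le_of_lt hn).trans (Nat.mul_le_mul_right n (by omega))
  set n' := n / s + 1
  have hn'n : n' < n := by
    have : n / s ≤ n / 4 := Nat.div_le_div_left (by omega) (by norm_num)
    omega
  have hrow : ∀ p ∈ A, p.1 / s < n' := fun p hp =>
    Nat.lt_succ_of_le (Nat.div_le_div_right (hn p hp).1.le)
  have hcol : ∀ p ∈ A, p.2 / s < n' := fun p hp =>
    Nat.lt_succ_of_le (Nat.div_le_div_right (hn p hp).2.le)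
  have hblocks : #(A.image (blockIndex s)) ≤ c * n' := by
    refine ih n' hn'n (forall_mem_image.2 fun p hp => ⟨hrow p hp, hcol p hp⟩) fun h => ?_
    exact hA h.of_image_blockIndex
  have hwide := card_wideBlocks_le (by omega) hA hcol
  have htall := card_tallBlocks_le (by omega) hA hrow
  have hsn' : s * n' ≤ 2 * n := by
    have := Nat.mul_div_le n s
    rw [mul_add, mul_one]
    omega
  have h₁ : k ^ 2 * n' * 2 ≤ n := by nlinarith
  have h₂ : s ^ 2 * (2 ^ s * k) * n' * 4 ≤ c * n := by
    nlinarith [Nat.mul_le_mul (by omega : 4 * (s ^ 2 * (2 ^ s * k)) ≤ c) hn'n.le]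
  calc #A ≤ k ^ 2 * #(A.image (blockIndex s)) + s ^ 2 * #(wideBlocks k s A) +
        s ^ 2 * #(tallBlocks k s A) := card_le_blocks (by omega) k A
    _ ≤ k ^ 2 * (c * n') + s ^ 2 * (2 ^ s * k * n') + s ^ 2 * (2 ^ s * k * n') := by gcongr
    _ ≤ c * n := by nlinarith

end MarcusTardos

/-! ### Flips and chord models -/

section Flip

variable {V : Type} {G₀ G : SimpleGraph V}

/-- `G` arises from `G₀` by complementing the adjacency between the colour classes `c` and `d` of
`col` whenever `s c d` holds. -/
def IsFlip {κ : Type} (G₀ G : SimpleGraph V) (col : V → κ) (s : κ → κ → Prop) : Prop :=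
  ∀ u v, u ≠ v → (G.Adj u v ↔ Xor (G₀.Adj u v) (s (col u) (col v)))

lemma exists_isFlip_foldl_elemPerturb (L : List (Set V)) (G₀ : SimpleGraph V) :
    ∃ (κ : Type) (_ : Fintype κ) (col : V → κ) (s : κ → κ → Prop),
      Fintype.card κ = 2 ^ L.length ∧ IsFlip G₀ (L.foldl ElemPerturb G₀) col s := by
  induction L generalizing G₀ with
  | nil =>
    exact ⟨Unit, inferInstance, fun _ => (), fun _ _ => False, rfl, fun u v _ => by simp [Xor]⟩
  | cons X L ih =>
    obtain ⟨κ, _, col, s, hcard, hflip⟩ := ih (ElemPerturb G₀ X)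
    refine ⟨Prop × κ, inferInstance, fun v => (v ∈ X, col v),
      fun c d => Xor (c.1 ∧ d.1) (s c.2 d.2), ?_, fun u v huv => ?_⟩
    · rw [Fintype.card_prod, Fintype.card_prop, hcard, List.length_cons, pow_succ']
    · have hX : (ElemPerturb G₀ X).Adj u v ↔ Xor (G₀.Adj u v) (u ∈ X ∧ v ∈ X) :=
        and_iff_right huv
      rw [List.foldl_cons, hflip u v huv, hX]
      simp only [Xor]
      tauto

lemma BoundedPerturbOf.exists_isFlip {r : ℕ} (h : BoundedPerturbOf r G₀ G) :
    ∃ (κ : Type) (_ : Fintype κ) (col : V → κ) (s : κ → κ → Prop),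
      Fintype.card κ ≤ 2 ^ r ∧ IsFlip G₀ G col s := by
  obtain ⟨L, hL, rfl⟩ := h
  obtain ⟨κ, _, col, s, hcard, hflip⟩ := exists_isFlip_foldl_elemPerturb L G₀
  exact ⟨κ, _, col, s, hcard.le.trans (Nat.pow_le_pow_right two_pos hL), hflip⟩

end Flip

section ChordModel

variable {α β : Type} [LinearOrder α] [LinearOrder β]

/-- The chords with left endpoints `a false`, `b false` and right endpoints `a true`, `b true`
cross. -/
def Crossing (a b : Bool → α) : Prop :=
  (a false < b false ∧ b false < a true ∧ a true < b true) ∨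
    (b false < a false ∧ a false < b true ∧ b true < a true)

lemma crossing_iff_of_lt {a b : Bool → α} (hab : a false < b true) (hba : b false < a true)
    (hne : ∀ x, a x ≠ b x) : Crossing a b ↔ (a false < b false ↔ a true < b true) := by
  have := hne false
  have := hne true
  unfold Crossing
  grind

lemma crossing_comp_iff {a b : Bool → α} {φ : α → β} (hφ : Monotone φ)
    (hne : ∀ x y, φ (a x) ≠ φ (b y)) : Crossing (φ ∘ a) (φ ∘ b) ↔ Crossing a b := by
  have hab : ∀ x y, φ (a x) < φ (b y) ↔ a x < b y := fun x y =>
    ⟨hφ.reflect_lt, fun h => (hφ h.le).lt_of_ne (hne x y)⟩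
  have hba : ∀ x y, φ (b x) < φ (a y) ↔ b x < a y := fun x y =>
    ⟨hφ.reflect_lt, fun h => (hφ h.le).lt_of_ne (hne y x).symm⟩
  simp only [Crossing, Function.comp_apply, hab, hba]

variable {V : Type} {G : SimpleGraph V} {ψ : V → Bool → α}

/-- `ψ` assigns a left endpoint `ψ v false` and a right endpoint `ψ v true` to every vertex `v` in
such a way that crossing determines adjacency for chords without a common endpoint. Unlike in a
circle graph, endpoints may coincide, so that the notion is preserved by identifying consecutive
endpoints. -/
structure IsCoarseChordModel (G : SimpleGraph V) (ψ : V → Bool → α) : Prop where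
  le : ∀ v, ψ v false ≤ ψ v true
  adj_iff : ∀ u v, (∀ x y, ψ u x ≠ ψ v y) → (G.Adj u v ↔ Crossing (ψ u) (ψ v))

lemma IsCoarseChordModel.comp_monotone (h : IsCoarseChordModel G ψ) {φ : α → β}
    (hφ : Monotone φ) : IsCoarseChordModel G fun v => φ ∘ ψ v where
  le v := hφ (h.le v)
  adj_iff u v hne := by
    rw [crossing_comp_iff hφ hne, h.adj_iff u v fun x y hxy => hne x y (congrArg φ hxy)]

lemma exists_monotone_nat_injective_comp {ι : Type} [Finite ι] {f : ι → α}
    (hf : Function.Injective f) : ∃ φ : α → ℕ, Monotone φ ∧ Function.Injective (φ ∘ f) := by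
  have := Fintype.ofFinite ι
  have hmono : Monotone fun x => #{i | f i < x} := fun x y hxy =>
    card_le_card (monotone_filter_right _ fun i _ hi => lt_of_lt_of_le hi hxy)
  refine ⟨_, hmono, fun i j hij => hf (le_antisymm ?_ ?_)⟩ <;> by_contra! hlt
  · refine hij.not_gt (card_lt_card ((monotone_filter_right _ ?_).ssubset_of_mem_notMem
      (a := j) ?_ ?_)) <;> grind
  · refine hij.not_lt (card_lt_card ((monotone_filter_right _ ?_).ssubset_of_mem_notMem
      (a := i) ?_ ?_)) <;> grind

lemma IsCircleGraph.exists_isCoarseChordModel {n : ℕ} {G : SimpleGraph (Fin n)}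
    (h : IsCircleGraph G) :
    ∃ ψ : Fin n → Bool → ℕ, Function.Injective ψ.uncurry ∧ IsCoarseChordModel G ψ := by
  obtain ⟨l, r, hlr, hinj, hadj⟩ := h
  obtain ⟨φ, hφ, hφinj⟩ := exists_monotone_nat_injective_comp hinj
  have hmodel : IsCoarseChordModel G fun v x => if x then r v else l v :=
    { le v := (hlr v).le
      adj_iff u v hne := hadj u v fun huv => hne true true (huv ▸ rfl) }
  exact ⟨fun v x => φ (if x then r v else l v), hφinj, hmodel.comp_monotone hφ⟩

end ChordModel

/-! ### Permutation graphs in chord models -/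

section Extraction

variable {α V : Type} [LinearOrder α] {h : ℕ} {τ ρ : Equiv.Perm (Fin h)}

/-- The permutation of `Fin (h + h)` that exchanges the two halves, acting as `τ` on each. -/
def doubled (τ : Equiv.Perm (Fin h)) : Equiv.Perm (Fin (h + h)) :=
  finSumFinEquiv.symm.trans (((Equiv.sumCongr τ τ).trans (Equiv.sumComm _ _)).trans finSumFinEquiv)

lemma doubled_castAdd (i : Fin h) : doubled τ (i.castAdd h) = (τ i).natAdd h := by
  simp [doubled]

lemma doubled_natAdd (i : Fin h) : doubled τ (i.natAdd h) = (τ i).castAdd h := by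
  simp only [doubled, Equiv.trans_apply, finSumFinEquiv_symm_apply_natAdd, Equiv.sumCongr_apply,
    Sum.map_inr, Equiv.sumComm_apply, Sum.swap_inr, finSumFinEquiv_apply_left]

/-- The square 0/1 matrix whose ones are the positions in `S` contains the permutation matrix of
`σ` strictly above the diagonal, in the strong sense that all rows used precede all columns used. -/
def ContainsPatternAbove (σ : Equiv.Perm (Fin h)) (S : Finset (α × α)) : Prop :=
  ∃ a b : Fin h → α, StrictMono a ∧ StrictMono b ∧ (∀ i j, a i < b j) ∧ ∀ i, (a i, b (σ i)) ∈ S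

lemma ContainsPattern.above_of_doubled {S : Finset (α × α)} (hS : ∀ p ∈ S, p.swap ∈ S)
    (hτ : ContainsPattern (doubled τ) S) :
    ContainsPatternAbove τ S ∨ ContainsPatternAbove τ⁻¹ S := by
  obtain ⟨a, b, ha, hb, hab⟩ := hτ
  have hhalf : ∀ i j : Fin h, i.castAdd h < j.natAdd h := fun i j => by
    simp only [Fin.lt_def, Fin.val_castAdd, Fin.val_natAdd]
    omega
  have hcast : StrictMono (Fin.castAdd h : Fin h → Fin (h + h)) := Fin.strictMono_castAdd h
  have hnat : StrictMono (Fin.natAdd h : Fin h → Fin (h + h)) := Fin.strictMono_natAdd h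
  by_cases habove : ∀ i j : Fin h, a (i.castAdd h) < b (j.natAdd h)
  · refine .inl ⟨_, _, ha.comp hcast, hb.comp hnat, habove, fun i => ?_⟩
    have := hab (i.castAdd h)
    rwa [doubled_castAdd] at this
  · push Not at habove
    obtain ⟨i₀, j₀, hle⟩ := habove
    refine .inr ⟨_, _, hb.comp hcast, ha.comp hnat, fun i j => ?_, fun i => ?_⟩
    · exact (hb (hhalf i j₀)).trans (hle.trans_lt (ha (hhalf i₀ j)))
    · have := hS _ (hab ((τ⁻¹ i).natAdd h))
      rwa [doubled_natAdd, Equiv.Perm.inv_def, Equiv.apply_symm_apply] at this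

/-- The symmetric 0/1 matrix, indexed by endpoints, of the chords of the vertices in `U`. -/
def endpointPairs (ψ : V → Bool → α) (U : Finset V) : Finset (α × α) :=
  (U ×ˢ univ).image fun p => (ψ p.1 p.2, ψ p.1 !p.2)

variable {G : SimpleGraph V} {ψ : V → Bool → α} {U : Finset V}

lemma mem_endpointPairs {y z : α} :
    (y, z) ∈ endpointPairs ψ U ↔ ∃ u ∈ U, ∃ x, ψ u x = y ∧ ψ u (!x) = z := by
  simp only [endpointPairs, mem_image, mem_product, mem_univ, and_true, Prod.exists,
    Prod.mk.injEq, exists_and_left]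

lemma swap_mem_endpointPairs {p : α × α} (hp : p ∈ endpointPairs ψ U) :
    p.swap ∈ endpointPairs ψ U := by
  obtain ⟨u, hu, x, h₁, h₂⟩ := mem_endpointPairs.1 hp
  exact mem_endpointPairs.2 ⟨u, hu, !x, h₂, by rwa [Bool.not_not]⟩

namespace IsCoarseChordModel

lemma exists_embedding_of_containsPatternAbove (hψ : IsCoarseChordModel G ψ)
    (hρ : ContainsPatternAbove ρ (endpointPairs ψ U)) :
    ∃ f : Fin h ↪ V, (∀ i, f i ∈ U) ∧
      ∀ i j, i ≠ j → (G.Adj (f i) (f j) ↔ (i < j ↔ ρ i < ρ j)) := by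
  obtain ⟨a, b, ha, hb, hab, hmem⟩ := hρ
  choose f hfU x hfa hfb using fun i => mem_endpointPairs.1 (hmem i)
  have hx : ∀ i, x i = false := fun i => by
    by_contra! hxi
    have hlt := hab i (ρ i)
    rw [← hfa, ← hfb, Bool.of_not_eq_false hxi] at hlt
    exact hlt.not_ge (hψ.le _)
  simp only [hx, Bool.not_false] at hfa hfb
  have hne : ∀ i j, i ≠ j → ∀ y z, ψ (f i) y ≠ ψ (f j) z := by
    rintro i j hij (_ | _) (_ | _) <;> simp only [hfa, hfb]
    · exact ha.injective.ne hij
    · exact (hab _ _).ne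
    · exact (hab _ _).ne'
    · exact hb.injective.ne (ρ.injective.ne hij)
  have hf : Function.Injective f := fun i j hij => by
    by_contra hne'
    exact hne i j hne' true true (hij ▸ rfl)
  refine ⟨⟨f, hf⟩, hfU, fun i j hij => (hψ.adj_iff _ _ (hne i j hij)).trans ?_⟩
  rw [crossing_iff_of_lt (by simpa only [hfa, hfb] using hab _ _)
    (by simpa only [hfa, hfb] using hab _ _) fun y => hne i j hij y y]
  simp only [hfa, hfb, ha.lt_iff_lt, hb.lt_iff_lt]

lemma exists_embedding_of_containsPattern_doubled (hψ : IsCoarseChordModel G ψ)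
    (hτ : ContainsPattern (doubled τ) (endpointPairs ψ U)) :
    ∃ f : Fin h ↪ V, (∀ i, f i ∈ U) ∧
      ∀ i j, i ≠ j → (G.Adj (f i) (f j) ↔ (i < j ↔ τ i < τ j)) := by
  obtain hτ | hτ := hτ.above_of_doubled fun _ => swap_mem_endpointPairs
  · exact hψ.exists_embedding_of_containsPatternAbove hτ
  · obtain ⟨f, hfU, hf⟩ := hψ.exists_embedding_of_containsPatternAbove hτ
    refine ⟨τ.toEmbedding.trans f, fun i => hfU _, fun i j hij => ?_⟩
    refine (hf _ _ (τ.injective.ne hij)).trans ?_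
    simpa using Iff.comm

end IsCoarseChordModel

lemma exists_equiv_fin_lt_iff (β : Type) [Fintype β] [LinearOrder β] :
    ∃ e : β ≃ Fin (Fintype.card β), ∀ x y, x < y ↔ e x < e y :=
  let e := (Fintype.orderIsoFinOfCardEq β rfl).symm
  ⟨e.toEquiv, fun _ _ => e.lt_iff_lt.symm⟩

lemma IsPermutationGraph.exists_equiv {H : SimpleGraph (Fin h)} (hH : IsPermutationGraph H) :
    ∃ e₁ e₂ : Fin h ≃ Fin h, ∀ x y, x ≠ y → (H.Adj x y ↔ (e₁ x < e₁ y ↔ e₂ x < e₂ y)) := by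
  obtain ⟨L₁, L₂, hL⟩ := hH
  have hcard := Fintype.card_fin h
  obtain ⟨e₁, he₁⟩ := hcard ▸ @exists_equiv_fin_lt_iff (Fin h) _ L₁
  obtain ⟨e₂, he₂⟩ := hcard ▸ @exists_equiv_fin_lt_iff (Fin h) _ L₂
  refine ⟨e₁, e₂.trans Fin.revPerm, fun x y hxy => ?_⟩
  have hopposite : ∀ {i j k l : Fin h}, i ≠ j → k ≠ l →
      ((i < j ∧ l < k) ∨ (j < i ∧ k < l) ↔ (i < j ↔ l < k)) := by grind
  refine (hL x y hxy).trans ?_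
  simpa only [he₁, he₂, Equiv.trans_apply, Fin.revPerm_apply, Fin.rev_lt_rev] using
    hopposite (e₁.injective.ne hxy) (e₂.injective.ne hxy)

lemma IsPermutationGraph.exists_xor_iff {H : SimpleGraph (Fin h)} (hH : IsPermutationGraph H)
    (b : Prop) : ∃ (e : Fin h ≃ Fin h) (τ : Equiv.Perm (Fin h)), ∀ x y, x ≠ y →
      (H.Adj x y ↔ Xor (e x < e y ↔ τ (e x) < τ (e y)) b) := by
  obtain ⟨e₁, e₂, he⟩ := hH.exists_equiv
  by_cases hb : b
  · refine ⟨e₁, (e₁.symm.trans e₂).trans Fin.revPerm, fun x y hxy => ?_⟩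
    have h₂ : e₂ x ≠ e₂ y := e₂.injective.ne hxy
    rw [he x y hxy]
    simp only [Equiv.trans_apply, Equiv.symm_apply_apply, Fin.revPerm_apply, Fin.rev_lt_rev, hb]
    grind
  · refine ⟨e₁, e₁.symm.trans e₂, fun x y hxy => ?_⟩
    simp only [he x y hxy, Equiv.trans_apply, Equiv.symm_apply_apply, hb]
    grind

section Count

variable {κ : Type} {G₀ : SimpleGraph V} {H : SimpleGraph (Fin h)} {ψ : V → Bool → ℕ}
  {col : V → κ} {s : κ → κ → Prop} {m : ℕ}

lemma card_endpointPairs_le_of_color (hH : IsPermutationGraph H) (hHG : ¬ Nonempty (H ↪g G))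
    (hflip : IsFlip G₀ G col s) (hψ : IsCoarseChordModel G₀ ψ) (hm : ∀ v x, ψ v x < m) {c : κ}
    (hU : ∀ u ∈ U, col u = c) :
    #(endpointPairs ψ U) ≤ marcusTardosConst (h + h) * m := by
  obtain ⟨e, τ, hτ⟩ := hH.exists_xor_iff (s c c)
  refine card_le_of_not_containsPattern (σ := doubled τ) (fun p hp => ?_) fun hcontains => hHG ?_
  · obtain ⟨u, -, x, h₁, h₂⟩ := mem_endpointPairs.1 hp
    exact ⟨h₁ ▸ hm u x, h₂ ▸ hm u !x⟩
  · obtain ⟨f, hfU, hf⟩ := hψ.exists_embedding_of_containsPattern_doubled hcontains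
    refine ⟨⟨e.toEmbedding.trans f, fun {x y} => ?_⟩⟩
    obtain rfl | hxy := eq_or_ne x y
    · simp
    have hexy := e.injective.ne hxy
    change G.Adj (f (e x)) (f (e y)) ↔ H.Adj x y
    rw [hflip _ _ (f.injective.ne hexy), hU _ (hfU _), hU _ (hfU _), hf _ _ hexy, hτ x y hxy]

theorem card_endpointPairs_le [Fintype V] [Fintype κ] (hH : IsPermutationGraph H)
    (hHG : ¬ Nonempty (H ↪g G)) (hflip : IsFlip G₀ G col s) (hψ : IsCoarseChordModel G₀ ψ)
    (hm : ∀ v x, ψ v x < m) :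
    #(endpointPairs ψ univ) ≤ Fintype.card κ * marcusTardosConst (h + h) * m := by
  classical
  have hcover : endpointPairs ψ univ ⊆ univ.biUnion fun c => endpointPairs ψ {v | col v = c} := by
    intro p hp
    obtain ⟨u, -, x, hx⟩ := mem_endpointPairs.1 hp
    exact mem_biUnion.2
      ⟨col u, mem_univ _, mem_endpointPairs.2 ⟨u, mem_filter.2 ⟨mem_univ u, rfl⟩, x, hx⟩⟩
  rw [mul_assoc]
  exact (card_le_card hcover).trans (card_biUnion_le_card_mul _ _ _ fun c _ =>
    card_endpointPairs_le_of_color hH hHG hflip hψ hm fun u hu => (mem_filter.1 hu).2)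

end Count

end Extraction

/-! ### Collapsing endpoints -/

section Collapse

variable {m N d i j x y : ℕ} {S : Finset (ℕ × ℕ)}

/-- Every row of the 0/1 matrix with ones at `S` has at most `d` ones. -/
def RowsLE (d : ℕ) (S : Finset (ℕ × ℕ)) : Prop :=
  ∀ i, #{p ∈ S | p.1 = i} ≤ d

lemma RowsLE.card_filter_mem_le (hS : RowsLE d S) (I : Finset ℕ) :
    #{p ∈ S | p.1 ∈ I} ≤ d * #I := by
  refine card_le_mul_card_image_of_maps_to (f := Prod.fst) (fun p hp => (mem_filter.1 hp).2) d
    fun i _ => (card_le_card ?_).trans (hS i)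
  exact filter_subset_filter _ (filter_subset _ _)

/-- The monotone map of `ℕ` onto itself identifying `j` with `j + 1` and no other numbers. -/
def collapse (j x : ℕ) : ℕ := if x ≤ j then x else x - 1

lemma monotone_collapse (j : ℕ) : Monotone (collapse j) := by
  intro x y hxy
  unfold collapse
  grind

lemma collapse_lt (hj : j < m) (hx : x < m + 1) : collapse j x < m := by
  unfold collapse
  grind

lemma eq_or_eq_add_one_of_collapse_eq (h : collapse j x = y) : x = y ∨ x = y + 1 := by
  unfold collapse at h
  grind

lemma rowsLE_image_collapse (hS : RowsLE d S) (hj : #{p ∈ S | p.1 = j ∨ p.1 = j + 1} ≤ d) :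
    RowsLE d (S.image (Prod.map (collapse j) (collapse j))) := by
  intro i
  rw [filter_image]
  refine card_image_le.trans ?_
  simp only [Prod.map_fst]
  obtain rfl | hij := eq_or_ne i j
  · refine (card_le_card (monotone_filter_right S fun p _ hp => ?_)).trans hj
    exact eq_or_eq_add_one_of_collapse_eq hp
  · refine (card_le_card (monotone_filter_right S fun p _ hp => ?_)).trans
      (hS (if i ≤ j then i else i + 1))
    unfold collapse at hp
    grind

lemma exists_rowsLE_image_collapse (hm : 0 < m) (hN : #S ≤ N * (m + 1)) (hd : 4 * N ≤ d)
    (hS : RowsLE d S) : ∃ j < m, RowsLE d (S.image (Prod.map (collapse j) (collapse j))) := by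
  -- Average over the `(m + 1) / 2` disjoint pairs of consecutive rows.
  have hlt : #S < #(range ((m + 1) / 2)) * (d + 1) := by
    rw [card_range]
    have : N * (m + 1) ≤ N * (4 * ((m + 1) / 2)) := Nat.mul_le_mul_left _ (by omega)
    have : 4 * N * ((m + 1) / 2) ≤ d * ((m + 1) / 2) := Nat.mul_le_mul_right _ hd
    have : 0 < (m + 1) / 2 := by omega
    nlinarith
  obtain ⟨q, hq, hqd⟩ := exists_card_fiber_lt_of_card_lt_mul (f := fun p => p.1 / 2) hlt
  have := mem_range.1 hq
  refine ⟨2 * q, by omega, rowsLE_image_collapse hS ?_⟩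
  exact (card_le_card (monotone_filter_right S fun p _ hp => by omega)).trans
    (Nat.lt_succ_iff.1 hqd)

end Collapse

section ChordContraction

variable {V κ : Type} {G₀ G : SimpleGraph V} {ψ : V → Bool → ℕ} {col : V → κ} {s : κ → κ → Prop}
  {N d m : ℕ}

lemma IsFlip.adj_congr (hflip : IsFlip G₀ G col s) (hψ : IsCoarseChordModel G₀ ψ) {a a' b b' : V}
    (hne : ∀ x y, ψ a x ≠ ψ b y) (ha : (ψ a', col a') = (ψ a, col a))
    (hb : (ψ b', col b') = (ψ b, col b)) : G.Adj a' b' ↔ G.Adj a b := by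
  obtain ⟨haψ, hacol⟩ := Prod.ext_iff.1 ha
  obtain ⟨hbψ, hbcol⟩ := Prod.ext_iff.1 hb
  dsimp only at haψ hacol hbψ hbcol
  have hne' : ∀ x y, ψ a' x ≠ ψ b' y := by rwa [haψ, hbψ]
  rw [hflip a b fun h => hne true true (h ▸ rfl), hflip a' b' fun h => hne' true true (h ▸ rfl),
    hψ.adj_iff a b hne, hψ.adj_iff a' b' hne', haψ, hbψ, hacol, hbcol]

lemma endpointPairs_comp (φ : ℕ → ℕ) (U : Finset V) :
    endpointPairs (fun v => φ ∘ ψ v) U = (endpointPairs ψ U).image (Prod.map φ φ) := by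
  rw [endpointPairs, endpointPairs, image_image]
  rfl

lemma RowsLE.card_image_filter_exists_mem_le [Fintype V] (hrows : RowsLE d (endpointPairs ψ univ))
    (I : Finset ℕ) : #(image ψ {v | ∃ x, ψ v x ∈ I}) ≤ 2 * (d * #I) := by
  have hcover : image ψ {v | ∃ x, ψ v x ∈ I} ⊆
      ((univ : Finset Bool) ×ˢ {p ∈ endpointPairs ψ univ | p.1 ∈ I}).image
        fun q x => if x = q.1 then q.2.1 else q.2.2 := by
    intro f hf
    obtain ⟨v, hv, rfl⟩ := mem_image.1 hf
    obtain ⟨x, hx⟩ := (mem_filter.1 hv).2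
    refine mem_image.2 ⟨(x, ψ v x, ψ v !x), ?_, ?_⟩
    · exact mem_product.2 ⟨mem_univ x,
        mem_filter.2 ⟨mem_endpointPairs.2 ⟨v, mem_univ v, x, rfl, rfl⟩, hx⟩⟩
    · cases x <;> exact funext (Bool.forall_bool.2 ⟨rfl, rfl⟩)
  refine (card_le_card hcover).trans (card_image_le.trans ?_)
  rw [card_product, card_univ, Fintype.card_bool]
  exact Nat.mul_le_mul_left 2 (hrows.card_filter_mem_le I)

variable [Fintype V] [DecidableEq V]

lemma IsFlip.isHomog (hflip : IsFlip G₀ G col s) (hψ : IsCoarseChordModel G₀ ψ)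
    {R : Finpartition (univ : Finset V)} (hR : R ≤ fiberPartition fun v => (ψ v, col v))
    {A B : Finset V} (hA : A ∈ R.parts) (hB : B ∈ R.parts) {a b : V} (ha : a ∈ A) (hb : b ∈ B)
    (hne : ∀ x y, ψ a x ≠ ψ b y) : IsHomog G A B := by
  have hadj : ∀ a' ∈ A, ∀ b' ∈ B, G.Adj a' b' ↔ G.Adj a b := fun a' ha' b' hb' =>
    hflip.adj_congr hψ hne (le_fiberPartition_iff.1 hR A hA a' ha' a ha)
      (le_fiberPartition_iff.1 hR B hB b' hb' b hb)
  exact (em (G.Adj a b)).imp (fun h a' ha' b' hb' => (hadj a' ha' b' hb').2 h)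
    fun h a' ha' b' hb' => mt (hadj a' ha' b' hb').1 h

variable [Fintype κ]

lemma contractsTo_collapse (hflip : IsFlip G₀ G col s) (hψ : IsCoarseChordModel G₀ ψ)
    (hrows : RowsLE d (endpointPairs ψ univ)) (j : ℕ) :
    ContractsTo G (8 * d * Fintype.card κ) (fiberPartition fun v => (ψ v, col v))
      (fiberPartition fun v => (collapse j ∘ ψ v, col v)) := by
  refine contractsTo_of_le (le_fiberPartition_iff.2 fun A hA a ha b hb => ?_)
    fun R hR hR' A hA => ?_
  · have hab := le_fiberPartition_iff.1 le_rfl A hA a ha b hb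
    rw [Prod.mk.injEq] at hab ⊢
    exact hab.imp_left (congrArg _)
  obtain ⟨a, ha⟩ := R.nonempty_of_mem_parts hA
  let I : Finset ℕ := image (fun q : Bool × Bool => collapse j (ψ a q.1) + q.2.toNat) univ
  have hI : #I ≤ 4 := card_image_le
  let K : Finset ((Bool → ℕ) × κ) := image ψ {v | ∃ x, ψ v x ∈ I} ×ˢ univ
  have hK : #K ≤ 8 * d * Fintype.card κ := by
    rw [card_product, card_univ]
    refine Nat.mul_le_mul_right _ ((hrows.card_image_filter_exists_mem_le I).trans ?_)
    nlinarith
  refine (redDegree_le_card hR K fun B hB hAB => ?_).trans hK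
  obtain ⟨b, hb⟩ := R.nonempty_of_mem_parts hB
  have hmeet : ∃ x y, collapse j (ψ a x) = collapse j (ψ b y) := by
    by_contra! hne
    exact hAB (hflip.isHomog (hψ.comp_monotone (monotone_collapse j)) hR' hA hB ha hb hne)
  obtain ⟨x, y, hxy⟩ := hmeet
  have hy : ψ b y ∈ I := by
    obtain h | h := eq_or_eq_add_one_of_collapse_eq hxy.symm
    · exact mem_image.2 ⟨(x, false), mem_univ _, h.symm⟩
    · exact mem_image.2 ⟨(x, true), mem_univ _, h.symm⟩
  exact ⟨b, hb, mem_product.2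
    ⟨mem_image_of_mem _ (mem_filter.2 ⟨mem_univ b, y, hy⟩), mem_univ _⟩⟩

lemma card_parts_fiberPartition_le_of_lt_one (hψ : ∀ v x, ψ v x < 1) :
    #(fiberPartition fun v => (ψ v, col v)).parts ≤ Fintype.card κ := by
  refine (Finpartition.card_mono (le_fiberPartition_iff.2 fun A hA a ha b hb => ?_)).trans
    (card_parts_fiberPartition_le col)
  refine Prod.ext (funext fun x => ?_) (le_fiberPartition_iff.1 le_rfl A hA a ha b hb)
  exact (Nat.lt_one_iff.1 (hψ a x)).trans (Nat.lt_one_iff.1 (hψ b x)).symm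

theorem contractsTo_top_of_card_endpointPairs_le (hflip : IsFlip G₀ G col s)
    (hN : ∀ (m : ℕ) (ψ : V → Bool → ℕ), IsCoarseChordModel G₀ ψ → (∀ v x, ψ v x < m) →
      #(endpointPairs ψ univ) ≤ N * m)
    (hd : 4 * N ≤ d) (hd₀ : 0 < d) (hψ : IsCoarseChordModel G₀ ψ) (hm : ∀ v x, ψ v x < m + 1)
    (hrows : RowsLE d (endpointPairs ψ univ)) :
    ContractsTo G (8 * d * Fintype.card κ) (fiberPartition fun v => (ψ v, col v)) ⊤ := by
  induction m generalizing ψ with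
  | zero =>
    refine contractsTo_top ((card_parts_fiberPartition_le_of_lt_one hm).trans ?_)
    exact Nat.le_mul_of_pos_left _ (by omega)
  | succ m ih =>
    obtain ⟨j, hj, hrows'⟩ :=
      exists_rowsLE_image_collapse m.succ_pos (hN _ ψ hψ hm) hd hrows
    rw [← endpointPairs_comp] at hrows'
    exact (contractsTo_collapse hflip hψ hrows j).trans
      (ih (hψ.comp_monotone (monotone_collapse j)) (fun v x => collapse_lt hj (hm v x)) hrows')

end ChordContraction

section PerturbedCircleGraphs

variable {n h : ℕ} {G₀ G : SimpleGraph (Fin n)} {H : SimpleGraph (Fin h)} {κ : Type} [Fintype κ]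
  {col : Fin n → κ} {s : κ → κ → Prop}

lemma rowsLE_one_of_injective {V : Type} [Fintype V] {ψ : V → Bool → ℕ}
    (hψ : Function.Injective ψ.uncurry) : RowsLE 1 (endpointPairs ψ univ) := by
  refine fun i => card_le_one.2 ?_
  rintro ⟨j, y⟩ hp ⟨k, z⟩ hq
  obtain ⟨hpψ, hj⟩ := mem_filter.1 hp
  obtain ⟨hqψ, hk⟩ := mem_filter.1 hq
  obtain ⟨u, -, x, hux, rfl⟩ := mem_endpointPairs.1 hpψ
  obtain ⟨v, -, x', hvx, rfl⟩ := mem_endpointPairs.1 hqψ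
  have huv : (u, x) = (v, x') := hψ (hux.trans (hj.trans (hk.symm.trans hvx.symm)))
  obtain ⟨rfl, rfl⟩ := Prod.ext_iff.1 huv
  rw [← hux, ← hvx]

theorem IsFlip.twinWidthLE_of_isCircleGraph (hflip : IsFlip G₀ G col s) (hG₀ : IsCircleGraph G₀)
    (hH : IsPermutationGraph H) (hHG : ¬ Nonempty (H ↪g G)) :
    TwinWidthLE G (8 * (4 * (Fintype.card κ * marcusTardosConst (h + h)) + 1) *
      Fintype.card κ) := by
  obtain ⟨ψ, hinj, hψ⟩ := hG₀.exists_isCoarseChordModel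
  obtain ⟨m, hm⟩ := (Set.finite_range ψ.uncurry).bddAbove
  have hkey : Function.Injective fun v => (ψ v, col v) := fun u v huv =>
    (Prod.ext_iff.1 (@hinj (u, true) (v, true) (congrFun (Prod.ext_iff.1 huv).1 true))).1
  have hcontract := contractsTo_top_of_card_endpointPairs_le hflip
    (fun _ _ => card_endpointPairs_le hH hHG hflip) (Nat.le_succ _) (Nat.succ_pos _) hψ
    (fun v x => Nat.lt_succ_of_le (hm ⟨(v, x), rfl⟩))
    fun i => (rowsLE_one_of_injective hinj i).trans (Nat.succ_pos _)
  rw [fiberPartition_eq_bot hkey] at hcontract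
  exact hcontract.twinWidthLE

theorem IsPermutationGraph.exists_twinWidthLE (hH : IsPermutationGraph H) (r : ℕ) :
    ∃ t, ∀ (n : ℕ) (G₀ G : SimpleGraph (Fin n)), IsCircleGraph G₀ → BoundedPerturbOf r G₀ G →
      ¬ Nonempty (H ↪g G) → TwinWidthLE G t := by
  refine ⟨8 * (4 * (2 ^ r * marcusTardosConst (h + h)) + 1) * 2 ^ r,
    fun n G₀ G hG₀ hpert hHG => ?_⟩
  obtain ⟨κ, _, col, s, hcard, hflip⟩ := hpert.exists_isFlip
  refine (hflip.twinWidthLE_of_isCircleGraph hG₀ hH hHG).mono ?_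
  gcongr

lemma Hereditary.mem_of_embedding {C : ∀ n : ℕ, Set (SimpleGraph (Fin n))} (hC : Hereditary C)
    (hG : G ∈ C n) (f : H ↪g G) : H ∈ C h :=
  hC h n H G hG ⟨f.toEmbedding, fun _ _ => f.map_rel_iff.symm⟩

end PerturbedCircleGraphs

/-- A hereditary class of `r`-bounded perturbations of circle graphs has
bounded twin-width iff it excludes some permutation graph. -/
theorem stmt1 (r : ℕ) (C : ∀ n : ℕ, Set (SimpleGraph (Fin n)))
    (hher : Hereditary C)
    (hpert : ∀ n : ℕ, ∀ G ∈ C n,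
      ∃ G₀ : SimpleGraph (Fin n), IsCircleGraph G₀ ∧ BoundedPerturbOf r G₀ G) :
    (∃ t : ℕ, ∀ n : ℕ, ∀ G ∈ C n, TwinWidthLE G t) ↔
      (∃ (m : ℕ) (H : SimpleGraph (Fin m)), IsPermutationGraph H ∧
        ∀ (k : ℕ), ∀ G ∈ C k, ¬ Nonempty (G ≃g H)) := by
  constructor
  · rintro ⟨t, ht⟩
    obtain ⟨n, H, hH, hlarge⟩ := exists_isPermutationGraph_not_twinWidthLE t
    refine ⟨n, H, hH, fun k G hG ⟨e⟩ => hlarge (ht n H ?_)⟩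
    exact hher.mem_of_embedding hG e.symm.toEmbedding
  · rintro ⟨h, H, hH, hexcl⟩
    obtain ⟨t, ht⟩ := hH.exists_twinWidthLE r
    refine ⟨t, fun n G hG => ?_⟩
    obtain ⟨G₀, hG₀, hG₀G⟩ := hpert n G hG
    refine ht n G₀ G hG₀ hG₀G fun ⟨f⟩ => ?_
    exact hexcl h H (hher.mem_of_embedding hG f) ⟨SimpleGraph.Iso.refl⟩
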